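/- Let L, B, T > 0, Ω = (0,L) × (−B,B), and let u be a smooth function on [0,L] × [−B,B] × [0,T] satisfying the modified Zakharov–Kuznetsov equation u_t + u_x + u² u_x + u_{xxx} + u_{xyy} = 0 on Ω × (0,T), with boundary conditions u(x,±B,t) = 0 for x ∈ (0,L), and u(0,y,t) = u(L,y,t) = u_x(L,y,t) = 0 for y ∈ (−B,B). Then for every t ∈ (0,T), (d/dt) ∫_Ω (1+x) u²(t) dx dy + ∫_{−B}^{B} u_x²(0,y,t) dy + ∫_Ω |∇u(t)|² dx dy + 2 ∫_Ω u_x²(t) dx dy − ∫_Ω u²(t) dx dy = (1/2) ∫_Ω u⁴(t) dx dy. -/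

import Mathlib

/-!
Multiplying the equation by `2(1+x)u` puts it in divergence form. With
`P = (1+x)(u² + u⁴/2 + 2u u_xx - u_x² - u_y²) - 2u u_x` and `Q = 2(1+x) u u_xy`,
a direct computation (using `u_xy = u_yx`) gives, wherever the equation holds,
`∂ₜ((1+x)u²) + P_x + Q_y + 3u_x² + u_y² = u² + u⁴/2`.

Integrate this over the rectangle. The boundary conditions give `Q = 0` on `y = ±B`, while on the
lateral sides `u = u_y = 0` (the tangential derivative of the vanishing trace), so `P = 0` at `x = L`
because `u_x(L,·) = 0`, and `P = -u_x²` at `x = 0`. Hence `∫∫ P_x = ∫ u_x(0,y)² dy` and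
`∫∫ Q_y = 0`. The time derivative is moved inside the double integral by applying
`hasDerivAt_intervalIntegral_of_continuous` to each variable.

The equation and boundary conditions are known only on open sides, which suffices because
the integrals do not see endpoints.
-/

open MeasureTheory Real Set

/-- Partial derivative in `x` of a function `u = u(x,y,t)`. -/
noncomputable def pdx (u : ℝ → ℝ → ℝ → ℝ) (x y t : ℝ) : ℝ := deriv (fun x' => u x' y t) x

/-- Partial derivative in `y` of a function `u = u(x,y,t)`. -/
noncomputable def pdy (u : ℝ → ℝ → ℝ → ℝ) (x y t : ℝ) : ℝ := deriv (fun y' => u x y' t) y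

/-- Partial derivative in `t` of a function `u = u(x,y,t)`. -/
noncomputable def pdt (u : ℝ → ℝ → ℝ → ℝ) (x y t : ℝ) : ℝ := deriv (fun t' => u x y t') t

/-- Joint smoothness of a function of `(x, y, t)` given in curried form. -/
def JointSmooth (v : ℝ → ℝ → ℝ → ℝ) : Prop :=
  ContDiff ℝ (⊤ : ℕ∞) (fun p : ℝ × ℝ × ℝ => v p.1 p.2.1 p.2.2)

namespace JointSmooth

variable {v : ℝ → ℝ → ℝ → ℝ}

lemma hasFDerivAt (hv : JointSmooth v) (p : ℝ × ℝ × ℝ) :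
    HasFDerivAt (fun p : ℝ × ℝ × ℝ => v p.1 p.2.1 p.2.2)
      (fderiv ℝ (fun p : ℝ × ℝ × ℝ => v p.1 p.2.1 p.2.2) p) p :=
  (hv.differentiable (by simp) p).hasFDerivAt

lemma hasDerivAt_fderiv_x (hv : JointSmooth v) (x y t : ℝ) :
    HasDerivAt (fun x' => v x' y t)
      (fderiv ℝ (fun p : ℝ × ℝ × ℝ => v p.1 p.2.1 p.2.2) (x, y, t) (1, 0, 0)) x := by
  have h := (hv.hasFDerivAt (x, y, t)).comp_hasDerivAt x
    ((hasDerivAt_id x).prodMk ((hasDerivAt_const x y).prodMk (hasDerivAt_const x t)))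
  exact h

lemma hasDerivAt_fderiv_y (hv : JointSmooth v) (x y t : ℝ) :
    HasDerivAt (fun y' => v x y' t)
      (fderiv ℝ (fun p : ℝ × ℝ × ℝ => v p.1 p.2.1 p.2.2) (x, y, t) (0, 1, 0)) y := by
  have h := (hv.hasFDerivAt (x, y, t)).comp_hasDerivAt y
    ((hasDerivAt_const y x).prodMk ((hasDerivAt_id y).prodMk (hasDerivAt_const y t)))
  exact h

lemma hasDerivAt_fderiv_t (hv : JointSmooth v) (x y t : ℝ) :
    HasDerivAt (fun t' => v x y t')
      (fderiv ℝ (fun p : ℝ × ℝ × ℝ => v p.1 p.2.1 p.2.2) (x, y, t) (0, 0, 1)) t := by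
  have h := (hv.hasFDerivAt (x, y, t)).comp_hasDerivAt t
    ((hasDerivAt_const t x).prodMk ((hasDerivAt_const t y).prodMk (hasDerivAt_id t)))
  exact h

lemma pdx_eq (hv : JointSmooth v) (x y t : ℝ) : pdx v x y t =
    fderiv ℝ (fun p : ℝ × ℝ × ℝ => v p.1 p.2.1 p.2.2) (x, y, t) (1, 0, 0) :=
  (hv.hasDerivAt_fderiv_x x y t).deriv

lemma pdy_eq (hv : JointSmooth v) (x y t : ℝ) : pdy v x y t =
    fderiv ℝ (fun p : ℝ × ℝ × ℝ => v p.1 p.2.1 p.2.2) (x, y, t) (0, 1, 0) :=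
  (hv.hasDerivAt_fderiv_y x y t).deriv

lemma pdt_eq (hv : JointSmooth v) (x y t : ℝ) : pdt v x y t =
    fderiv ℝ (fun p : ℝ × ℝ × ℝ => v p.1 p.2.1 p.2.2) (x, y, t) (0, 0, 1) :=
  (hv.hasDerivAt_fderiv_t x y t).deriv

lemma hasDerivAt_x (hv : JointSmooth v) (x y t : ℝ) :
    HasDerivAt (fun x' => v x' y t) (pdx v x y t) x :=
  hv.pdx_eq x y t ▸ hv.hasDerivAt_fderiv_x x y t

lemma hasDerivAt_y (hv : JointSmooth v) (x y t : ℝ) :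
    HasDerivAt (fun y' => v x y' t) (pdy v x y t) y :=
  hv.pdy_eq x y t ▸ hv.hasDerivAt_fderiv_y x y t

lemma hasDerivAt_t (hv : JointSmooth v) (x y t : ℝ) :
    HasDerivAt (fun t' => v x y t') (pdt v x y t) t :=
  hv.pdt_eq x y t ▸ hv.hasDerivAt_fderiv_t x y t

lemma fderiv_const_apply (hv : JointSmooth v) (e : ℝ × ℝ × ℝ) :
    ContDiff ℝ (⊤ : ℕ∞)
      (fun p => fderiv ℝ (fun p : ℝ × ℝ × ℝ => v p.1 p.2.1 p.2.2) p e) :=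
  (ContDiff.fderiv_right (m := ((⊤ : ℕ∞) : WithTop ℕ∞)) hv (by simp)).clm_apply contDiff_const

lemma smooth_pdx (hv : JointSmooth v) : JointSmooth (pdx v) := by
  simpa only [JointSmooth, hv.pdx_eq] using hv.fderiv_const_apply (1, 0, 0)

lemma smooth_pdy (hv : JointSmooth v) : JointSmooth (pdy v) := by
  simpa only [JointSmooth, hv.pdy_eq] using hv.fderiv_const_apply (0, 1, 0)

lemma smooth_pdt (hv : JointSmooth v) : JointSmooth (pdt v) := by
  simpa only [JointSmooth, hv.pdt_eq] using hv.fderiv_const_apply (0, 0, 1)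

lemma fderiv_fderiv_apply (hv : JointSmooth v) (p e d : ℝ × ℝ × ℝ) :
    fderiv ℝ (fun p => fderiv ℝ (fun p : ℝ × ℝ × ℝ => v p.1 p.2.1 p.2.2) p e) p d =
      fderiv ℝ (fderiv ℝ (fun p : ℝ × ℝ × ℝ => v p.1 p.2.1 p.2.2)) p d e := by
  have hd : DifferentiableAt ℝ (fderiv ℝ (fun p : ℝ × ℝ × ℝ => v p.1 p.2.1 p.2.2)) p :=
    (ContDiff.fderiv_right (m := 1) hv (by norm_cast)).differentiable (by simp) p
  rw [(hd.hasFDerivAt.clm_apply (hasFDerivAt_const e p)).fderiv]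
  simp

/-- Equality of the mixed partial derivatives in `x` and `y`. -/
lemma pdx_pdy (hv : JointSmooth v) (x y t : ℝ) :
    pdx (pdy v) x y t = pdy (pdx v) x y t := by
  have hsymm : IsSymmSndFDerivAt ℝ (fun p : ℝ × ℝ × ℝ => v p.1 p.2.1 p.2.2) (x, y, t) :=
    (ContDiff.contDiffAt hv).isSymmSndFDerivAt (by
      simp only [minSmoothness_of_isRCLikeNormedField]; norm_cast)
  rw [hv.smooth_pdy.pdx_eq, hv.smooth_pdx.pdy_eq]
  simp only [hv.pdx_eq, hv.pdy_eq]
  rw [hv.fderiv_fderiv_apply, hv.fderiv_fderiv_apply]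
  exact hsymm.eq _ _

/-- Joint continuity, composed with arbitrary continuous arguments: the resulting hypotheses have
the syntactic form in which `fun_prop` meets `v` inside the integrands. -/
lemma continuous_comp (hv : JointSmooth v) {X : Type*} [TopologicalSpace X] {a b c : X → ℝ}
    (ha : Continuous a) (hb : Continuous b) (hc : Continuous c) :
    Continuous fun z => v (a z) (b z) (c z) :=
  (ContDiff.continuous hv).comp (ha.prodMk (hb.prodMk hc))

end JointSmooth

/-- Differentiation under an interval integral when the derivative is jointly continuous: it is
bounded on the compact set `[t - 1, t + 1] × [a, b]`, which provides the dominating constant. -/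
lemma hasDerivAt_intervalIntegral_of_continuous {F F' : ℝ → ℝ → ℝ} (a b t : ℝ)
    (hF : Continuous (Function.uncurry F)) (hF' : Continuous (Function.uncurry F'))
    (h : ∀ s x, HasDerivAt (fun s' => F s' x) (F' s x) s) :
    HasDerivAt (fun s => ∫ x in a..b, F s x) (∫ x in a..b, F' t x) t := by
  obtain ⟨C, hC⟩ := ((isCompact_Icc (a := t - 1) (b := t + 1)).prod
    (isCompact_uIcc (a := a) (b := b))).exists_bound_of_continuousOn hF'.continuousOn
  have hFs : ∀ s, Continuous (F s) := fun s => hF.comp (continuous_const.prodMk continuous_id)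
  have hF's : Continuous (F' t) := hF'.comp (continuous_const.prodMk continuous_id)
  refine (intervalIntegral.hasDerivAt_integral_of_dominated_loc_of_deriv_le
    (F := F) (F' := F') (s := Icc (t - 1) (t + 1)) (bound := fun _ => C)
    (Icc_mem_nhds (by linarith) (by linarith)) ?_ ?_ ?_ ?_ ?_ ?_).2
  · exact Filter.Eventually.of_forall fun s => (hFs s).aestronglyMeasurable
  · exact (hFs t).intervalIntegrable _ _
  · exact hF's.aestronglyMeasurable
  · exact Filter.Eventually.of_forall fun x hx s hs => hC (s, x) ⟨hs, uIoc_subset_uIcc hx⟩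
  · exact intervalIntegrable_const
  · exact Filter.Eventually.of_forall fun x _ s _ => h s x

/-- Linearity of the iterated integral over a rectangle, on continuous functions. -/
lemma intervalIntegral_add_const_mul {f g : ℝ → ℝ → ℝ} (c a b a' b' : ℝ)
    (hf : Continuous (Function.uncurry f)) (hg : Continuous (Function.uncurry g)) :
    ∫ x in a..b, ∫ y in a'..b', (f x y + c * g x y) =
      (∫ x in a..b, ∫ y in a'..b', f x y) + c * ∫ x in a..b, ∫ y in a'..b', g x y := by
  have h1 : ∀ {k : ℝ → ℝ → ℝ}, Continuous (Function.uncurry k) → ∀ x,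
      IntervalIntegrable (k x) volume a' b' := fun hk x =>
    (hk.comp (continuous_const.prodMk continuous_id)).intervalIntegrable _ _
  have h2 : ∀ {k : ℝ → ℝ → ℝ}, Continuous (Function.uncurry k) →
      IntervalIntegrable (fun x => ∫ y in a'..b', k x y) volume a b := fun hk =>
    (intervalIntegral.continuous_parametric_intervalIntegral_of_continuous' hk
      a' b').intervalIntegrable _ _
  have h3 : ∀ x, ∫ y in a'..b', (f x y + c * g x y) =
      (∫ y in a'..b', f x y) + c * ∫ y in a'..b', g x y := fun x => by
    rw [intervalIntegral.integral_add (h1 hf x) ((h1 hg x).const_mul c),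
      intervalIntegral.integral_const_mul]
  simp only [h3]
  rw [intervalIntegral.integral_add (h2 hf) ((h2 hg).const_mul c),
    intervalIntegral.integral_const_mul]

/-- The `x`-component `P` of the energy flux. -/
noncomputable def fluxX (u : ℝ → ℝ → ℝ → ℝ) (t x y : ℝ) : ℝ :=
  (1 + x) * (u x y t ^ 2 + 1 / 2 * u x y t ^ 4 + 2 * u x y t * pdx (pdx u) x y t
    - pdx u x y t ^ 2 - pdy u x y t ^ 2) - 2 * u x y t * pdx u x y t

/-- The `y`-component `Q` of the energy flux. -/
noncomputable def fluxY (u : ℝ → ℝ → ℝ → ℝ) (t x y : ℝ) : ℝ :=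
  2 * (1 + x) * (u x y t * pdy (pdx u) x y t)

/-- The derivative `P_x`, expanded. -/
noncomputable def fluxXDeriv (u : ℝ → ℝ → ℝ → ℝ) (t x y : ℝ) : ℝ :=
  u x y t ^ 2 + 1 / 2 * u x y t ^ 4 - 3 * pdx u x y t ^ 2 - pdy u x y t ^ 2
    + 2 * (1 + x) * (u x y t * (pdx u x y t + u x y t ^ 2 * pdx u x y t
        + pdx (pdx (pdx u)) x y t) - pdy u x y t * pdy (pdx u) x y t)

/-- The derivative `Q_y`, expanded. -/
noncomputable def fluxYDeriv (u : ℝ → ℝ → ℝ → ℝ) (t x y : ℝ) : ℝ :=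
  2 * (1 + x) * (pdy u x y t * pdy (pdx u) x y t + u x y t * pdy (pdy (pdx u)) x y t)

lemma hasDerivAt_fluxX {u : ℝ → ℝ → ℝ → ℝ} (hu : JointSmooth u) (t x y : ℝ) :
    HasDerivAt (fun x' => fluxX u t x' y) (fluxXDeriv u t x y) x := by
  have h0 := hu.hasDerivAt_x x y t
  have h1 := hu.smooth_pdx.hasDerivAt_x x y t
  have h2 := hu.smooth_pdx.smooth_pdx.hasDerivAt_x x y t
  have hy := hu.smooth_pdy.hasDerivAt_x x y t
  rw [hu.pdx_pdy] at hy
  have hw := (hasDerivAt_id x).const_add 1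
  have H := (hw.mul (((((h0.pow 2).add ((h0.pow 4).const_mul (1 / 2))).add
    ((h0.const_mul 2).mul h2)).sub (h1.pow 2)).sub (hy.pow 2))).sub ((h0.const_mul 2).mul h1)
  refine H.congr_deriv ?_
  simp [fluxXDeriv]
  ring

lemma hasDerivAt_fluxY {u : ℝ → ℝ → ℝ → ℝ} (hu : JointSmooth u) (t x y : ℝ) :
    HasDerivAt (fun y' => fluxY u t x y') (fluxYDeriv u t x y) y :=
  ((hu.hasDerivAt_y x y t).mul (hu.smooth_pdx.smooth_pdy.hasDerivAt_y x y t)).const_mul _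

lemma continuous_fluxXDeriv {u : ℝ → ℝ → ℝ → ℝ} (hu : JointSmooth u) (t : ℝ) :
    Continuous (Function.uncurry (fluxXDeriv u t)) := by
  have h0 := hu.continuous_comp continuous_fst continuous_snd (continuous_const (y := t))
  have h1 := hu.smooth_pdx.continuous_comp continuous_fst continuous_snd (continuous_const (y := t))
  have h3 := hu.smooth_pdx.smooth_pdx.smooth_pdx.continuous_comp continuous_fst continuous_snd
    (continuous_const (y := t))
  have h4 := hu.smooth_pdy.continuous_comp continuous_fst continuous_snd (continuous_const (y := t))
  have h5 := hu.smooth_pdx.smooth_pdy.continuous_comp continuous_fst continuous_snd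
    (continuous_const (y := t))
  unfold fluxXDeriv Function.uncurry
  fun_prop

lemma continuous_fluxYDeriv {u : ℝ → ℝ → ℝ → ℝ} (hu : JointSmooth u) (t : ℝ) :
    Continuous (Function.uncurry (fluxYDeriv u t)) := by
  have h0 := hu.continuous_comp continuous_fst continuous_snd (continuous_const (y := t))
  have h4 := hu.smooth_pdy.continuous_comp continuous_fst continuous_snd (continuous_const (y := t))
  have h5 := hu.smooth_pdx.smooth_pdy.continuous_comp continuous_fst continuous_snd
    (continuous_const (y := t))
  have h6 := hu.smooth_pdx.smooth_pdy.smooth_pdy.continuous_comp continuous_fst continuous_snd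
    (continuous_const (y := t))
  unfold fluxYDeriv Function.uncurry
  fun_prop

lemma deriv_weighted_energy {u : ℝ → ℝ → ℝ → ℝ} (hu : JointSmooth u) (L B t : ℝ) :
    deriv (fun s => ∫ x in (0:ℝ)..L, ∫ y in (-B)..B, (1 + x) * (u x y s) ^ 2) t =
      ∫ x in (0:ℝ)..L, ∫ y in (-B)..B, 2 * (1 + x) * (u x y t * pdt u x y t) := by
  -- Continuity in all of `(s, x)` and `y`, needed for the iterated use of the lemma.
  have hs : Continuous fun q : (ℝ × ℝ) × ℝ => q.1.1 := by fun_prop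
  have hx : Continuous fun q : (ℝ × ℝ) × ℝ => q.1.2 := by fun_prop
  have h0 := hu.continuous_comp hx continuous_snd hs
  have h1 := hu.smooth_pdt.continuous_comp hx continuous_snd hs
  have hF : Continuous (Function.uncurry fun (p : ℝ × ℝ) (y : ℝ) =>
      (1 + p.2) * (u p.2 y p.1) ^ 2) :=
    (continuous_const.add hx).mul (h0.pow 2)
  have hF' : Continuous (Function.uncurry fun (p : ℝ × ℝ) (y : ℝ) =>
      2 * (1 + p.2) * (u p.2 y p.1 * pdt u p.2 y p.1)) :=
    (continuous_const.mul (continuous_const.add hx)).mul (h0.mul h1)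
  refine (hasDerivAt_intervalIntegral_of_continuous
    (F := fun s x => ∫ y in (-B)..B, (1 + x) * (u x y s) ^ 2)
    (F' := fun s x => ∫ y in (-B)..B, 2 * (1 + x) * (u x y s * pdt u x y s)) 0 L t
    (intervalIntegral.continuous_parametric_intervalIntegral_of_continuous' hF (-B) B)
    (intervalIntegral.continuous_parametric_intervalIntegral_of_continuous' hF' (-B) B)
    fun s x => ?_).deriv
  have hι : Continuous fun q : ℝ × ℝ => ((q.1, x), q.2) := by fun_prop
  refine hasDerivAt_intervalIntegral_of_continuous
    (F := fun s y => (1 + x) * (u x y s) ^ 2)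
    (F' := fun s y => 2 * (1 + x) * (u x y s * pdt u x y s)) (-B) B s
    (hF.comp hι) (hF'.comp hι) fun s y => ?_
  refine (((hu.hasDerivAt_t x y s).pow 2).const_mul (1 + x)).congr_deriv ?_
  simp
  ring

/-- The weighted energy identity for smooth solutions of the modified
Zakharov–Kuznetsov equation `u_t + u_x + u²u_x + u_{xxx} + u_{xyy} = 0` on the
rectangle `Ω = (0,L) × (-B,B)`:
`(d/dt)∫(1+x)u² + ∫ u_x²(0,y,t) dy + ∫|∇u|² + 2∫u_x² − ∫u² = (1/2)∫u⁴`. -/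
theorem mZK_weighted_energy_identity
    (L B T : ℝ) (hL : 0 < L) (hB : 0 < B) (hT : 0 < T)
    (u : ℝ → ℝ → ℝ → ℝ)
    (hu : ContDiff ℝ (⊤ : ℕ∞) (fun p : ℝ × ℝ × ℝ => u p.1 p.2.1 p.2.2))
    (heq : ∀ x ∈ Set.Ioo (0 : ℝ) L, ∀ y ∈ Set.Ioo (-B) B, ∀ t ∈ Set.Ioo (0 : ℝ) T,
      pdt u x y t + pdx u x y t + (u x y t) ^ 2 * pdx u x y t
        + pdx (pdx (pdx u)) x y t + pdy (pdy (pdx u)) x y t = 0)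
    (hbcY : ∀ x ∈ Set.Ioo (0 : ℝ) L, ∀ t ∈ Set.Icc (0 : ℝ) T,
      u x (-B) t = 0 ∧ u x B t = 0)
    (hbcX : ∀ y ∈ Set.Ioo (-B) B, ∀ t ∈ Set.Icc (0 : ℝ) T,
      u 0 y t = 0 ∧ u L y t = 0 ∧ pdx u L y t = 0) :
    ∀ t ∈ Set.Ioo (0 : ℝ) T,
      deriv (fun s => ∫ x in (0:ℝ)..L, ∫ y in (-B)..B, (1 + x) * (u x y s) ^ 2) t
        + (∫ y in (-B)..B, (pdx u 0 y t) ^ 2)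
        + (∫ x in (0:ℝ)..L, ∫ y in (-B)..B, ((pdx u x y t) ^ 2 + (pdy u x y t) ^ 2))
        + 2 * (∫ x in (0:ℝ)..L, ∫ y in (-B)..B, (pdx u x y t) ^ 2)
        - (∫ x in (0:ℝ)..L, ∫ y in (-B)..B, (u x y t) ^ 2)
      = (1 / 2) * ∫ x in (0:ℝ)..L, ∫ y in (-B)..B, (u x y t) ^ 4 := by
  intro t ht
  have htc : t ∈ Icc (0 : ℝ) T := Ioo_subset_Icc_self ht
  have hu' : JointSmooth u := hu
  have hBB : -B ≤ B := by linarith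
  -- The tangential derivative vanishes on the lateral sides.
  have hpdy : ∀ c : ℝ, (∀ y ∈ Ioo (-B) B, u c y t = 0) → ∀ y ∈ Ioo (-B) B, pdy u c y t = 0 := by
    intro c hc y hy
    have h : (fun y' => u c y' t) =ᶠ[nhds y] fun _ => 0 :=
      Filter.eventually_of_mem (isOpen_Ioo.mem_nhds hy) hc
    exact h.deriv_eq.trans (deriv_const y 0)
  have hPx : ∫ x in (0:ℝ)..L, ∫ y in (-B)..B, fluxXDeriv u t x y =
      ∫ y in (-B)..B, (pdx u 0 y t) ^ 2 := by
    have hc := continuous_fluxXDeriv hu' t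
    rw [intervalIntegral_intervalIntegral_swap]
    · refine intervalIntegral.integral_congr_Ioo_of_le hBB fun y hy => ?_
      obtain ⟨h0, hL0, hLx⟩ := hbcX y hy t htc
      have h0y := hpdy 0 (fun y hy => (hbcX y hy t htc).1) y hy
      have hLy := hpdy L (fun y hy => (hbcX y hy t htc).2.1) y hy
      have hcy : Continuous fun x => fluxXDeriv u t x y :=
        hc.comp (continuous_id.prodMk continuous_const)
      change ∫ x in (0:ℝ)..L, fluxXDeriv u t x y = (pdx u 0 y t) ^ 2
      rw [intervalIntegral.integral_eq_sub_of_hasDerivAt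
        (fun x _ => hasDerivAt_fluxX hu' t x y) (hcy.intervalIntegrable _ _)]
      simp [fluxX, h0, hL0, hLx, h0y, hLy]
    · exact (hc.continuousOn.integrableOn_compact
        (isCompact_uIcc.prod isCompact_uIcc)).mono_set
        (Set.prod_mono uIoc_subset_uIcc uIoc_subset_uIcc)
  have hQy : ∫ x in (0:ℝ)..L, ∫ y in (-B)..B, fluxYDeriv u t x y = 0 := by
    have hc := continuous_fluxYDeriv hu' t
    refine (intervalIntegral.integral_congr_Ioo_of_le (g := fun _ => (0 : ℝ)) hL.le
      fun x hx => ?_).trans (by simp)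
    obtain ⟨h1, h2⟩ := hbcY x hx t htc
    have hcx : Continuous fun y => fluxYDeriv u t x y :=
      hc.comp (continuous_const.prodMk continuous_id)
    change ∫ y in (-B)..B, fluxYDeriv u t x y = 0
    rw [intervalIntegral.integral_eq_sub_of_hasDerivAt
      (fun y _ => hasDerivAt_fluxY hu' t x y) (hcx.intervalIntegrable _ _)]
    simp [fluxY, h1, h2]
  -- The local energy balance, integrated over the rectangle.
  have hmain : ∫ x in (0:ℝ)..L, ∫ y in (-B)..B, 2 * (1 + x) * (u x y t * pdt u x y t) =
      ∫ x in (0:ℝ)..L, ∫ y in (-B)..B, ((((((u x y t) ^ 2 + 1 / 2 * (u x y t) ^ 4)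
        + (-2) * (pdx u x y t) ^ 2) + (-1) * ((pdx u x y t) ^ 2 + (pdy u x y t) ^ 2))
        + (-1) * fluxXDeriv u t x y) + (-1) * fluxYDeriv u t x y) := by
    refine intervalIntegral.integral_congr_Ioo_of_le hL.le fun x hx => ?_
    refine intervalIntegral.integral_congr_Ioo_of_le hBB fun y hy => ?_
    have he := heq x hx y hy t ht
    simp only [fluxXDeriv, fluxYDeriv]
    linear_combination 2 * (1 + x) * u x y t * he
  have c0 := hu'.continuous_comp continuous_fst continuous_snd (continuous_const (y := t))
  have c1 := hu'.smooth_pdx.continuous_comp continuous_fst continuous_snd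
    (continuous_const (y := t))
  have c2 := hu'.smooth_pdy.continuous_comp continuous_fst continuous_snd
    (continuous_const (y := t))
  have cX := continuous_fluxXDeriv hu' t
  have cY := continuous_fluxYDeriv hu' t
  unfold Function.uncurry at cX cY
  rw [intervalIntegral_add_const_mul (-1) _ _ _ _ (by unfold Function.uncurry; fun_prop)
      (by unfold Function.uncurry; fun_prop),
    intervalIntegral_add_const_mul (-1) _ _ _ _ (by unfold Function.uncurry; fun_prop)
      (by unfold Function.uncurry; fun_prop),
    intervalIntegral_add_const_mul (-1) _ _ _ _ (by unfold Function.uncurry; fun_prop)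
      (by unfold Function.uncurry; fun_prop),
    intervalIntegral_add_const_mul (-2) _ _ _ _ (by unfold Function.uncurry; fun_prop)
      (by unfold Function.uncurry; fun_prop),
    intervalIntegral_add_const_mul (1 / 2) _ _ _ _ (by unfold Function.uncurry; fun_prop)
      (by unfold Function.uncurry; fun_prop), hPx, hQy] at hmain
  rw [deriv_weighted_energy hu' L B t, hmain]
  ring
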